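/- Let M ≥ 3 be an integer and let a ∈ (0,1], b ∈ [0,1) satisfy a² + b² = 1. For each integer k define T_k = (a·cos(2πk/M), a·sin(2πk/M), b) ∈ ℝ³. Then for every integer k, the vectors T_{k−1} × T_k and T_k × T_{k+1} are nonzero, have equal norms, and ⟨T_{k−1} × T_k, T_k × T_{k+1}⟩ / ‖T_{k−1} × T_k‖² = cos(2·arctan(b·tan(π/M))); that is, the angle between consecutive binormal directions of the regular helical M-polygon equals θ₀ = 2·arctan(b·tan(π/M)). -/

import Mathlib

open RealInnerProductSpace Matrix

/-- The cross product on `EuclideanSpace ℝ (Fin 3)`. -/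
noncomputable def cross3 (u v : EuclideanSpace ℝ (Fin 3)) : EuclideanSpace ℝ (Fin 3) :=
  (WithLp.equiv 2 (Fin 3 → ℝ)).symm
    (crossProduct ((WithLp.equiv 2 (Fin 3 → ℝ)) u) ((WithLp.equiv 2 (Fin 3 → ℝ)) v))

lemma helix_cross (a b m p : ℝ) :
    cross3 ((WithLp.equiv 2 (Fin 3 → ℝ)).symm ![a * Real.cos (m - p), a * Real.sin (m - p), b])
      ((WithLp.equiv 2 (Fin 3 → ℝ)).symm ![a * Real.cos (m + p), a * Real.sin (m + p), b]) =
    !₂[2 * a * Real.sin p * (-b * Real.cos m), 2 * a * Real.sin p * (-b * Real.sin m),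
      2 * a * Real.sin p * (a * Real.cos p)] := by
  have h := Real.sin_sq_add_cos_sq m
  ext i
  fin_cases i
  · simp [cross3, cross_apply, Real.sin_add, Real.sin_sub]
    ring
  · simp [cross3, cross_apply, Real.cos_add, Real.cos_sub]
    ring
  · simp [cross3, cross_apply, Real.cos_add, Real.cos_sub, Real.sin_add, Real.sin_sub]
    linear_combination (2 * a ^ 2 * Real.sin p * Real.cos p) * h

lemma helix_inner (r u v w u' v' w' : ℝ) :
    ⟪(!₂[r * u, r * v, r * w] : EuclideanSpace ℝ (Fin 3)), !₂[r * u', r * v', r * w']⟫ =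
      r ^ 2 * (u * u' + v * v' + w * w') := by
  simp [PiLp.inner_apply, Fin.sum_univ_three]
  ring

/-- The angle between the consecutive binormal directions `T_{k−1} × T_k` and
`T_k × T_{k+1}` of the regular helical M-polygon equals the torsion angle
`θ₀ = 2·arctan(b·tan(π/M))`: these cross products are nonzero, have equal norms, and
`⟨T_{k−1} × T_k, T_k × T_{k+1}⟩ / ‖T_{k−1} × T_k‖² = cos θ₀`. -/
theorem helical_polygon_torsion_angle (M : ℕ) (hM : 3 ≤ M)
    (a b : ℝ) (ha : a ∈ Set.Ioc (0 : ℝ) 1) (hb : b ∈ Set.Ico (0 : ℝ) 1)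
    (hab : a ^ 2 + b ^ 2 = 1)
    (T : ℤ → EuclideanSpace ℝ (Fin 3))
    (hT : ∀ k : ℤ, T k = (WithLp.equiv 2 (Fin 3 → ℝ)).symm
      ![a * Real.cos (2 * Real.pi * k / M), a * Real.sin (2 * Real.pi * k / M), b]) :
    ∀ k : ℤ,
      cross3 (T (k - 1)) (T k) ≠ 0 ∧
      cross3 (T k) (T (k + 1)) ≠ 0 ∧
      ‖cross3 (T (k - 1)) (T k)‖ = ‖cross3 (T k) (T (k + 1))‖ ∧
      ⟪cross3 (T (k - 1)) (T k), cross3 (T k) (T (k + 1))⟫ / ‖cross3 (T (k - 1)) (T k)‖ ^ 2 =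
        Real.cos (2 * Real.arctan (b * Real.tan (Real.pi / M))) := by
  intro k
  obtain ⟨ha0, -⟩ := ha
  have hM' : (3 : ℝ) ≤ M := by exact_mod_cast hM
  have hM0 : (M : ℝ) ≠ 0 := by positivity
  set p : ℝ := Real.pi / M with hp
  set x : ℝ := 2 * Real.pi * k / M with hx
  have hp0 : 0 < p := by have := Real.pi_pos; positivity
  have hp2 : p < Real.pi / 2 := by
    rw [hp]
    exact div_lt_div_of_pos_left Real.pi_pos (by norm_num) (by linarith)
  have hs : 0 < Real.sin p := Real.sin_pos_of_pos_of_lt_pi hp0 (by linarith [Real.pi_pos])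
  have hc : 0 < Real.cos p := Real.cos_pos_of_mem_Ioo ⟨by linarith, hp2⟩
  have e1 : 2 * Real.pi * ((k - 1 : ℤ) : ℝ) / M = (x - p) - p := by
    rw [hx, hp]; push_cast; field_simp; ring
  have e2 : 2 * Real.pi * ((k + 1 : ℤ) : ℝ) / M = (x + p) + p := by
    rw [hx, hp]; push_cast; field_simp; ring
  have c1 := helix_cross a b (x - p) p
  have c2 := helix_cross a b (x + p) p
  rw [sub_add_cancel] at c1
  rw [add_sub_cancel_right] at c2
  have t0 := hT k
  have t1 := hT (k - 1)
  have t2 := hT (k + 1)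
  rw [← hx] at t0
  rw [e1] at t1
  rw [e2] at t2
  rw [← t0, ← t1] at c1
  rw [← t0, ← t2] at c2
  have h := Real.sin_sq_add_cos_sq p
  have hx1 := Real.sin_sq_add_cos_sq x
  have n1 : ‖cross3 (T (k - 1)) (T k)‖ ^ 2 =
      (2 * a * Real.sin p) ^ 2 * (Real.cos p ^ 2 + b ^ 2 * Real.sin p ^ 2) := by
    rw [← real_inner_self_eq_norm_sq, c1, helix_inner]
    congr 1
    linear_combination b ^ 2 * Real.sin_sq_add_cos_sq (x - p) - b ^ 2 * h + Real.cos p ^ 2 * hab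
  have n2 : ‖cross3 (T k) (T (k + 1))‖ ^ 2 =
      (2 * a * Real.sin p) ^ 2 * (Real.cos p ^ 2 + b ^ 2 * Real.sin p ^ 2) := by
    rw [← real_inner_self_eq_norm_sq, c2, helix_inner]
    congr 1
    linear_combination b ^ 2 * Real.sin_sq_add_cos_sq (x + p) - b ^ 2 * h + Real.cos p ^ 2 * hab
  have i1 : ⟪cross3 (T (k - 1)) (T k), cross3 (T k) (T (k + 1))⟫ =
      (2 * a * Real.sin p) ^ 2 * (Real.cos p ^ 2 - b ^ 2 * Real.sin p ^ 2) := by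
    rw [c1, c2, helix_inner]
    congr 1
    rw [Real.cos_add, Real.cos_sub, Real.sin_add, Real.sin_sub]
    linear_combination b ^ 2 * (Real.cos p ^ 2 - Real.sin p ^ 2) * hx1 + Real.cos p ^ 2 * hab
  have hpos : 0 < (2 * a * Real.sin p) ^ 2 * (Real.cos p ^ 2 + b ^ 2 * Real.sin p ^ 2) := by
    positivity
  refine ⟨?_, ?_, ?_, ?_⟩
  · intro h0
    rw [h0] at n1
    simp only [norm_zero] at n1
    linarith
  · intro h0
    rw [h0] at n2
    simp only [norm_zero] at n2
    linarith
  · exact (sq_eq_sq₀ (norm_nonneg _) (norm_nonneg _)).1 (n1.trans n2.symm)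
  · rw [i1, n1, Real.cos_two_mul, Real.cos_sq_arctan, Real.tan_eq_sin_div_cos]
    have : Real.cos p ^ 2 + b ^ 2 * Real.sin p ^ 2 ≠ 0 := by positivity
    have h3 : 1 + (b * (Real.sin p / Real.cos p)) ^ 2 =
      (Real.cos p ^ 2 + b ^ 2 * Real.sin p ^ 2) / Real.cos p ^ 2 := by
      field_simp
    rw [h3]
    field_simp
    ring
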